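/- arXiv:2107.02866 — 3 statements merged into one kernel-verified Lean document; each statement's English description precedes it below -/
import Mathlib

section
/- Let b and eps be real numbers with b >= 2 and 0 < eps < 1/2, and set c = 1 / (b * sqrt(eps)). Then for every natural number k >= 1, eps^k * (sum over i from 1 to k of c^i / i!) < exp(-1). -/
/-! The bound at selector value `k + 1` is `eps` times the bound at `k` plus the new term
`(eps * c) ^ (k + 1) / (k + 1)!`. The bound at `k` already contains `(eps * c) ^ k / k!`, so the
new term is at most `eps * c / (k + 1)` times it, and the bound does not increase from `k` to
`k + 1` as soon as `eps + eps * c / (k + 1) ≤ 1`. This holds from `k = 1` on, where the value is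
`eps * c = sqrt eps / b < 1 / (2 * sqrt 2)`, and `exp 1 < 2 * sqrt 2`. -/

section HashSelectorBound

variable {𝕜 : Type*} [Field 𝕜]

/-- The upper bound on the probability that an element has hash-selector value `k ≥ 1`, where
`r` is the false-positive probability and `c` is the number of unique queries per stored element. -/
def hashSelectorBound (r c : 𝕜) (k : ℕ) : 𝕜 :=
  r ^ k * ∑ i ∈ Finset.Icc 1 k, c ^ i / (Nat.factorial i : 𝕜)

theorem hashSelectorBound_one (r c : 𝕜) : hashSelectorBound r c 1 = r * c := by
  simp [hashSelectorBound]

theorem hashSelectorBound_succ (r c : 𝕜) (k : ℕ) :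
    hashSelectorBound r c (k + 1) =
      r * hashSelectorBound r c k + (r * c) ^ (k + 1) / (Nat.factorial (k + 1) : 𝕜) := by
  rw [hashSelectorBound, hashSelectorBound, Finset.sum_Icc_succ_top (by omega)]
  ring

variable [LinearOrder 𝕜] [IsStrictOrderedRing 𝕜] {r c : 𝕜}

theorem pow_div_factorial_le_hashSelectorBound (hr : 0 ≤ r) (hc : 0 ≤ c) {k : ℕ} (hk : 1 ≤ k) :
    (r * c) ^ k / (Nat.factorial k : 𝕜) ≤ hashSelectorBound r c k := by
  have last_le_sum : c ^ k / (Nat.factorial k : 𝕜) ≤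
      ∑ i ∈ Finset.Icc 1 k, c ^ i / (Nat.factorial i : 𝕜) :=
    Finset.single_le_sum (f := fun i ↦ c ^ i / (Nat.factorial i : 𝕜))
      (fun i _ ↦ by positivity) (Finset.mem_Icc.mpr ⟨hk, le_rfl⟩)
  rw [mul_pow, mul_div_assoc]
  exact mul_le_mul_of_nonneg_left last_le_sum (pow_nonneg hr k)

theorem hashSelectorBound_succ_le (hr : 0 ≤ r) (hc : 0 ≤ c) {k : ℕ} (hk : 1 ≤ k)
    (h : r + r * c / (k + 1) ≤ 1) :
    hashSelectorBound r c (k + 1) ≤ hashSelectorBound r c k := by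
  have last_le := pow_div_factorial_le_hashSelectorBound hr hc hk
  have bound_nonneg : 0 ≤ hashSelectorBound r c k := last_le.trans' (by positivity)
  calc hashSelectorBound r c (k + 1)
      = r * hashSelectorBound r c k
          + r * c / (k + 1) * ((r * c) ^ k / (Nat.factorial k : 𝕜)) := by
        rw [hashSelectorBound_succ, Nat.factorial_succ, pow_succ', Nat.cast_mul, Nat.cast_succ,
          mul_div_mul_comm]
    _ ≤ r * hashSelectorBound r c k + r * c / (k + 1) * hashSelectorBound r c k := by gcongr
    _ = (r + r * c / (k + 1)) * hashSelectorBound r c k := (add_mul _ _ _).symm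
    _ ≤ hashSelectorBound r c k := mul_le_of_le_one_left bound_nonneg h

theorem antitoneOn_hashSelectorBound (hr : 0 ≤ r) (hc : 0 ≤ c) {m : ℕ} (hm : 1 ≤ m)
    (h : r + r * c / (m + 1) ≤ 1) :
    AntitoneOn (hashSelectorBound r c) (Set.Ici m) := by
  refine antitoneOn_nat_Ici_of_succ_le fun k hmk ↦ ?_
  refine hashSelectorBound_succ_le hr hc (hm.trans hmk) (le_trans ?_ h)
  gcongr

end HashSelectorBound

theorem sqrt_div_lt_exp_neg_one {b x : ℝ} (hb : 2 ≤ b) (hx : x < 1 / 2) :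
    √x / b < Real.exp (-1) := by
  have sqrt_lt : √x < 0.72 := (Real.sqrt_lt' (by norm_num)).mpr (hx.trans (by norm_num))
  calc √x / b ≤ √x / 2 := by gcongr
    _ < 0.36 := by linarith
    _ < Real.exp (-1) := lt_trans (by norm_num) Real.exp_neg_one_gt_d9

/-- With `b ≥ 2`, `0 < eps < 1/2` and `c = 1/(b * sqrt eps)`, for every `k ≥ 1`,
`eps^k * ∑_{i=1}^{k} c^i / i! < exp(-1)`. -/
theorem stmt_9 (b eps : ℝ) (hb : 2 ≤ b) (heps0 : 0 < eps) (heps1 : eps < 1 / 2)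
    (c : ℝ) (hc : c = 1 / (b * Real.sqrt eps)) (k : ℕ) (hk : 1 ≤ k) :
    eps ^ k * ∑ i ∈ Finset.Icc 1 k, c ^ i / (Nat.factorial i : ℝ) < Real.exp (-1) := by
  have c_nonneg : 0 ≤ c := by rw [hc]; positivity
  have eps_mul_c : eps * c = √eps / b := by
    rw [hc, mul_one_div, mul_comm b, ← div_div, Real.div_sqrt]
  have eps_mul_c_lt : eps * c < Real.exp (-1) :=
    eps_mul_c ▸ sqrt_div_lt_exp_neg_one hb heps1
  have decrease : eps + eps * c / ((1 : ℕ) + 1) ≤ 1 := by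
    rw [Nat.cast_one, one_add_one_eq_two]
    linarith [Real.exp_neg_one_lt_half]
  calc hashSelectorBound eps c k
      ≤ hashSelectorBound eps c 1 :=
        antitoneOn_hashSelectorBound heps0.le c_nonneg le_rfl decrease Set.self_mem_Ici hk hk
    _ = eps * c := hashSelectorBound_one eps c
    _ < Real.exp (-1) := eps_mul_c_lt
end

section
/- Let eps and b be real numbers with 0 < eps < 1 and b > 1. Then the infinite series whose k-th term (for k >= 1) is (k / b^k) * eps^(k/2) * log(1/eps^k) converges and its sum is strictly less than b / (b - 1)^2, where log denotes the natural logarithm and eps^(k/2) is the real power sqrt(eps)^k. -/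
/-! With `x = √(eps ^ k)`, the factor `eps ^ (k / 2) * log (1 / eps ^ k)` is `-2 * x * log x`, and
`-x * log x` is at most `exp (-1) < 1 / 2`. Each term is therefore smaller than `k / b ^ k`, and
`∑ k / b ^ k = b / (b - 1) ^ 2` is the derivative of a geometric series. Convergence does not come
from this comparison, because the terms are negative when `1 < eps`: up to the constant `-log eps`
they are `k ^ 2 * (√eps / b) ^ k`, which is summable as soon as `√eps < b`. -/

open Real

theorem negMulLog_le_exp_neg_one {x : ℝ} (hx : 0 ≤ x) : negMulLog x ≤ exp (-1) := by
  rcases hx.eq_or_lt with rfl | hx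
  · simpa only [negMulLog_zero] using (exp_pos (-1)).le
  · simpa only [negMulLog, neg_neg, exp_log hx, neg_mul, mul_comm x] using
      mul_exp_neg_le_exp_neg_one (-log x)

theorem mul_log_one_div_sq_lt_one {x : ℝ} (hx : 0 ≤ x) : x * log (1 / x ^ 2) < 1 :=
  calc
    x * log (1 / x ^ 2) = 2 * negMulLog x := by
      rw [one_div, log_inv, log_pow, negMulLog]
      push_cast
      ring
    _ ≤ 2 * exp (-1) := by gcongr; exact negMulLog_le_exp_neg_one hx
    _ < 1 := by linarith [exp_neg_one_lt_half]

theorem sqrt_pow_mul_log_one_div_pow_lt_one {a : ℝ} (ha : 0 ≤ a) (n : ℕ) :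
    √a ^ n * log (1 / a ^ n) < 1 := by
  have sq_sqrt_pow : (√a ^ n) ^ 2 = a ^ n := by rw [pow_right_comm, sq_sqrt ha]
  simpa only [sq_sqrt_pow] using mul_log_one_div_sq_lt_one (pow_nonneg (sqrt_nonneg a) n)

theorem hasSum_succ_div_pow_succ {𝕜 : Type*} [NormedField 𝕜] {b : 𝕜} (hb : 1 < ‖b‖) :
    HasSum (fun k : ℕ => ((k + 1 : ℕ) : 𝕜) / b ^ (k + 1)) (b / (b - 1) ^ 2) := by
  have b_ne_zero : b ≠ 0 := norm_pos_iff.1 (one_pos.trans hb)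
  have norm_inv_lt_one : ‖b⁻¹‖ < 1 := by simpa only [norm_inv] using inv_lt_one_of_one_lt₀ hb
  have value_eq : b⁻¹ / (1 - b⁻¹) ^ 2 = b / (b - 1) ^ 2 := by
    rw [show 1 - b⁻¹ = (b - 1) / b by field_simp]
    field_simp
  have hasSum_inv : HasSum (fun k : ℕ => (k : 𝕜) / b ^ k) (b / (b - 1) ^ 2) := by
    simpa only [value_eq, inv_pow, ← div_eq_mul_inv] using
      hasSum_coe_mul_geometric_of_norm_lt_one norm_inv_lt_one
  simpa only [Finset.sum_range_one, Nat.cast_zero, zero_div, sub_zero] using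
    (hasSum_nat_add_iff' 1).2 hasSum_inv

theorem summable_div_pow_mul_pow_mul_log_one_div_pow (a : ℝ) {b s : ℝ} (hsb : |s| < |b|) :
    Summable fun k : ℕ => (k : ℝ) / b ^ k * (s ^ k * log (1 / a ^ k)) := by
  have ratio_lt_one : ‖s / b‖ < 1 := by
    rw [norm_div, norm_eq_abs, norm_eq_abs]
    exact (div_lt_one ((abs_nonneg s).trans_lt hsb)).2 hsb
  refine ((summable_pow_mul_geometric_of_norm_lt_one 2 ratio_lt_one).mul_left (-log a)).congr
    fun k => ?_
  rw [one_div, log_inv, log_pow, div_pow]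
  ring

theorem stmt_11_general (eps b : ℝ) (heps0 : 0 < eps) (hb : 1 < b) (heps : eps < b ^ 2) :
    ∃ S : ℝ,
      HasSum (fun k : ℕ =>
        (((k + 1 : ℕ) : ℝ) / b ^ (k + 1)) *
          (Real.sqrt eps ^ (k + 1) * Real.log (1 / eps ^ (k + 1)))) S ∧
      S < b / (b - 1) ^ 2 := by
  have b_pos : 0 < b := one_pos.trans hb
  have abs_sqrt_lt : |√eps| < |b| := by
    rw [abs_of_nonneg (sqrt_nonneg eps), abs_of_pos b_pos]
    exact (sqrt_lt' b_pos).2 heps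
  have summable_terms := (summable_nat_add_iff 1).2
    (summable_div_pow_mul_pow_mul_log_one_div_pow eps abs_sqrt_lt)
  have term_lt (k : ℕ) : ((k + 1 : ℕ) : ℝ) / b ^ (k + 1) *
      (√eps ^ (k + 1) * log (1 / eps ^ (k + 1))) < ((k + 1 : ℕ) : ℝ) / b ^ (k + 1) :=
    mul_lt_of_lt_one_right (by positivity) (sqrt_pow_mul_log_one_div_pow_lt_one heps0.le (k + 1))
  have hasSum_bound := hasSum_succ_div_pow_succ (hb.trans_le (le_norm_self b))
  exact ⟨_, summable_terms.hasSum,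
    hasSum_lt (fun k => (term_lt k).le) (term_lt 0) summable_terms.hasSum hasSum_bound⟩

/-- For `0 < eps < 1` and `b > 1`, the series whose `k`-th term (for `k ≥ 1`) is
`(k / b^k) * eps^(k/2) * log(1/eps^k)` converges, with sum strictly less than
`b / (b - 1)^2`.  Here `eps^(k/2)` is `sqrt(eps)^k`. -/
theorem stmt_11 (eps b : ℝ) (heps0 : 0 < eps) (heps1 : eps < 1) (hb : 1 < b) :
    ∃ S : ℝ,
      HasSum (fun k : ℕ =>
        (((k + 1 : ℕ) : ℝ) / b ^ (k + 1)) *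
          (Real.sqrt eps ^ (k + 1) * Real.log (1 / eps ^ (k + 1)))) S ∧
      S < b / (b - 1) ^ 2 :=
  stmt_11_general eps b heps0 hb (heps1.trans (one_lt_pow₀ hb two_ne_zero))
end

section
/- For all natural numbers m and n, (m * (2^n - 1)) / 2^n = (m / 2^n) * (2^n - 1) + (m % 2^n) - (if m % 2^n = 0 then 0 else 1), where / denotes truncated natural-number division, % denotes the remainder, and - denotes truncated natural-number subtraction. -/
/-!
With `k = 2 ^ n`, the numerator is `k * m - m`, so the floor equals `m - ⌈m / k⌉`. The ceiling is
`m / k`, plus one when `k ∤ m`, and Euclidean division turns `m - m / k` into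
`(m / k) * (k - 1) + m % k`.
-/

theorem mul_sub_div_eq_sub_ceilDiv {k : ℕ} (hk : 0 < k) (a b : ℕ) :
    (k * a - b) / k = a - b ⌈/⌉ k := by
  refine eq_of_forall_lt_iff fun c ↦ ?_
  have mul_succ_pos : 0 < k * (c + 1) := by positivity
  calc
    c < (k * a - b) / k ↔ k * (c + 1) ≤ k * a - b := by
      rw [← Nat.succ_le_iff, Nat.le_div_iff_mul_le hk, mul_comm]
    _ ↔ k * (c + 1) ≤ k * a ∧ b ≤ k * a - k * (c + 1) := by omega
    _ ↔ c + 1 ≤ a ∧ b ⌈/⌉ k ≤ a - (c + 1) := by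
      rw [mul_le_mul_iff_right₀ hk, ← Nat.mul_sub, ceilDiv_le_iff_le_mul hk]
    _ ↔ c < a - b ⌈/⌉ k := by omega

theorem ceilDiv_eq_div_add_ite {k : ℕ} (hk : 0 < k) (m : ℕ) :
    m ⌈/⌉ k = m / k + if m % k = 0 then 0 else 1 := by
  have carry : k ≤ m % k + (k - 1) ↔ m % k ≠ 0 := by omega
  rw [Nat.ceilDiv_eq_add_pred_div, Nat.add_sub_assoc hk, Nat.add_div hk,
    Nat.mod_eq_of_lt (Nat.sub_one_lt hk.ne'), Nat.div_eq_of_lt (Nat.sub_one_lt hk.ne')]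
  simp only [carry, add_zero, ne_eq, ite_not]

theorem sub_div_eq_div_mul_pred_add_mod (m k : ℕ) :
    m - m / k = m / k * (k - 1) + m % k := by
  have div_le_div_mul : m / k ≤ m / k * k := by
    rcases k.eq_zero_or_pos with rfl | hk
    · rw [Nat.div_zero, zero_mul]
    · exact Nat.le_mul_of_pos_right _ hk
  calc
    m - m / k = m / k * k + m % k - m / k := by rw [Nat.div_add_mod']
    _ = m / k * k - m / k + m % k := Nat.sub_add_comm div_le_div_mul
    _ = m / k * (k - 1) + m % k := by rw [Nat.mul_sub_one]

theorem stmt_13_general (m : ℕ) {k : ℕ} (hk : 0 < k) :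
    m * (k - 1) / k = m / k * (k - 1) + m % k - (if m % k = 0 then 0 else 1) := by
  calc
    m * (k - 1) / k = (k * m - m) / k := by rw [Nat.mul_sub_one, mul_comm]
    _ = m - m ⌈/⌉ k := mul_sub_div_eq_sub_ceilDiv hk m m
    _ = m - m / k - (if m % k = 0 then 0 else 1) := by
      rw [ceilDiv_eq_div_add_ite hk, Nat.sub_add_eq]
    _ = m / k * (k - 1) + m % k - (if m % k = 0 then 0 else 1) := by
      rw [sub_div_eq_div_mul_pred_add_mod]

/-- Integer identity behind the integer-only arithmetic coding:
`(m * (2^n - 1)) / 2^n = (m / 2^n) * (2^n - 1) + (m % 2^n) - [m % 2^n ≠ 0]`,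
in truncated natural-number arithmetic. -/
theorem stmt_13 (m n : ℕ) :
    (m * (2 ^ n - 1)) / 2 ^ n =
      (m / 2 ^ n) * (2 ^ n - 1) + (m % 2 ^ n) - (if m % 2 ^ n = 0 then 0 else 1) :=
  stmt_13_general m (Nat.two_pow_pos n)
end
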